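/- arXiv:1809.07808 — 2 statements merged into one kernel-verified Lean document; each statement's English description precedes it below -/
import Mathlib

section
/- Let A be a unital C*-algebra, t ∈ A and ε > 0. If t is ε-almost regular, then dist(t, R(A)) ≤ ε. -/
noncomputable section

/-- A closed two-sided ideal of a topological `ℂ`-algebra `A`. -/
structure ClosedIdeal (A : Type*) [NonUnitalNonAssocRing A] [Module ℂ A] [TopologicalSpace A] : Type _ where
  carrier : Submodule ℂ A
  mul_left_mem : ∀ (a x : A), x ∈ carrier → a * x ∈ carrier
  mul_right_mem : ∀ (a x : A), x ∈ carrier → x * a ∈ carrier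
  isClosed : IsClosed (carrier : Set A)

/-- `GL(A)`, the set of invertible elements of the unital algebra `A`. -/
def glSet (A : Type*) [Monoid A] : Set A := {a | IsUnit a}

/-- `R(A)`: the set of elements `a` of a unital algebra `A` such that for every closed
two-sided ideal `I`, if the image of `a` in `A/I` is left- or right-invertible, then it is
invertible.  (The image of `a` in `A/I` is left invertible iff `1 - b * a ∈ I` for some `b`,
right invertible iff `1 - a * b ∈ I` for some `b`, and invertible iff both hold for one `b`.) -/
def regSet (A : Type*) [Ring A] [Module ℂ A] [TopologicalSpace A] : Set A :=
  {a | ∀ I : ClosedIdeal A,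
    ((∃ b, 1 - b * a ∈ I.carrier) ∨ (∃ b, 1 - a * b ∈ I.carrier)) →
    ∃ b, 1 - b * a ∈ I.carrier ∧ 1 - a * b ∈ I.carrier}

/-- `|t| = (t* t)^(1/2)`, via the continuous functional calculus. -/
noncomputable def cstarAbs {A : Type*} [CStarAlgebra A] (t : A) : A :=
  cfc Real.sqrt (star t * t)

/-- `t` is `ε`-almost regular: the closed two-sided ideal generated by `f_ε(|t|)` equals the
closed two-sided ideal generated by `f_ε(|t*|)`, where `f_ε(x) = max (ε - x) 0`.  (Two elements
generate the same closed two-sided ideal iff they belong to exactly the same closed two-sided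
ideals.) -/
def AlmostRegular {A : Type*} [CStarAlgebra A] (ε : ℝ) (t : A) : Prop :=
  ∀ I : ClosedIdeal A,
    (cfc (fun x : ℝ => max (ε - x) 0) (cstarAbs t) ∈ I.carrier ↔
     cfc (fun x : ℝ => max (ε - x) 0) (cstarAbs (star t)) ∈ I.carrier)

/-!
Write `t = v|t|` for the polar decomposition (in the bidual, say). The element within `ε` of `t`
that lies in `R(A)` is the soft threshold `v(|t| - ε)₊ = t g(|t|)`, where
`g(x) = 1 - ε / max(x, ε)`. Since `g f_ε = 0`, left invertibility of `t g(|t|)` modulo `I` forces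
`f_ε(|t|) ∈ I`, hence also `f_ε(|t*|) ∈ I`. This makes `|t|` and `|t*|`, and therefore `t`,
invertible modulo `I`. Then `g(|t|)` is left invertible modulo `I`, and invertible because it is
self-adjoint. The right-handed case is the left-handed one for `t*`, because
`(t g(|t|))* = t* g(|t*|)` and closed ideals are self-adjoint.
-/

section FunctionalCalculus

variable {𝕜 A : Type*} {p : A → Prop} [RCLike 𝕜] [Ring A] [StarRing A] [Algebra 𝕜 A]
  [TopologicalSpace A] [ContinuousFunctionalCalculus 𝕜 A p] [IsSemitopologicalRing A] [T2Space A]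

lemma semiconjBy_cfcHomSuperset {x a b : A} {s : Set 𝕜} [CompactSpace s] (ha : p a) (hb : p b)
    (has : spectrum 𝕜 a ⊆ s) (hbs : spectrum 𝕜 b ⊆ s) (h : SemiconjBy x a b)
    (h_star : SemiconjBy x (star a) (star b)) (f : C(s, 𝕜)) :
    SemiconjBy x (cfcHomSuperset ha has f) (cfcHomSuperset hb hbs f) := by
  induction f using ContinuousMap.induction_on_of_compact with
  | const r =>
    change SemiconjBy x (cfcHomSuperset ha has (algebraMap 𝕜 C(s, 𝕜) r))
      (cfcHomSuperset hb hbs (algebraMap 𝕜 C(s, 𝕜) r))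
    rw [AlgHomClass.commutes, AlgHomClass.commutes]
    exact Algebra.commute_algebraMap_right r x
  | id => simpa only [cfcHomSuperset_id] using h
  | star_id => simpa only [map_star, cfcHomSuperset_id] using h_star
  | add f g hf hg => simpa only [map_add] using hf.add_right hg
  | mul f g hf hg => simpa only [map_mul] using hf.mul_right hg
  | frequently f hf =>
    have ha_cont := cfcHomSuperset_continuous ha has
    have hb_cont := cfcHomSuperset_continuous hb hbs
    exact hf.mem_of_closed <| isClosed_eq (by fun_prop) (by fun_prop)

open scoped ContinuousFunctionalCalculus in
lemma semiconjBy_cfc {x a b : A} {f : 𝕜 → 𝕜} (ha : p a) (hb : p b) (h : SemiconjBy x a b)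
    (h_star : SemiconjBy x (star a) (star b))
    (hf : ContinuousOn f (spectrum 𝕜 a ∪ spectrum 𝕜 b)) :
    SemiconjBy x (cfc f a) (cfc f b) := by
  have : CompactSpace ↑(spectrum 𝕜 a ∪ spectrum 𝕜 b) := isCompact_iff_compactSpace.mp <|
    (isCompact_iff_compactSpace.mpr inferInstance).union
      (isCompact_iff_compactSpace.mpr inferInstance)
  rw [cfc_apply f a ha (hf.mono Set.subset_union_left),
    cfc_apply f b hb (hf.mono Set.subset_union_right)]
  exact semiconjBy_cfcHomSuperset ha hb Set.subset_union_left Set.subset_union_right h h_star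
    ⟨_, hf.domRestrict⟩

end FunctionalCalculus

section AbsoluteValue

variable {A : Type*} [CStarAlgebra A]

lemma isSelfAdjoint_cstarAbs (t : A) : IsSelfAdjoint (cstarAbs t) :=
  cfc_predicate _ _

lemma nonneg_of_mem_spectrum_cstarAbs {t : A} {x : ℝ} (hx : x ∈ spectrum ℝ (cstarAbs t)) :
    0 ≤ x := by
  rw [cstarAbs, cfc_map_spectrum Real.sqrt (star t * t)] at hx
  obtain ⟨y, -, rfl⟩ := hx
  exact Real.sqrt_nonneg y

lemma cstarAbs_mul_cstarAbs (t : A) : cstarAbs t * cstarAbs t = star t * t := by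
  rw [cstarAbs, ← cfc_mul Real.sqrt Real.sqrt (star t * t)]
  conv_rhs => rw [← cfc_id' ℝ (star t * t)]
  exact cfc_congr fun x hx => Real.mul_self_sqrt (spectrum_star_mul_self_nonneg x hx)

lemma norm_cstarAbs_mul (t b : A) : ‖cstarAbs t * b‖ = ‖t * b‖ := by
  have h : star (cstarAbs t * b) * (cstarAbs t * b) = star (t * b) * (t * b) := calc
    _ = star b * (cstarAbs t * cstarAbs t) * b := by
      simp only [star_mul, (isSelfAdjoint_cstarAbs t).star_eq, mul_assoc]
    _ = star (t * b) * (t * b) := by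
      simp only [cstarAbs_mul_cstarAbs, star_mul, mul_assoc]
  rw [← mul_self_inj (norm_nonneg _) (norm_nonneg _), ← CStarRing.norm_star_mul_self, h,
    CStarRing.norm_star_mul_self]

lemma semiconjBy_cstarAbs (t : A) : SemiconjBy t (cstarAbs t) (cstarAbs (star t)) := by
  have h : SemiconjBy t (star t * t) (star (star t) * star t) := by
    simp only [SemiconjBy, star_star, mul_assoc]
  have ht : IsSelfAdjoint (star t * t) := .star_mul_self t
  have ht_star : IsSelfAdjoint (star (star t) * star t) := .star_mul_self (star t)
  exact semiconjBy_cfc ht ht_star h (by rwa [ht.star_eq, ht_star.star_eq])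
    Real.continuous_sqrt.continuousOn

lemma semiconjBy_cfc_cstarAbs (t : A) {f : ℝ → ℝ} (hf : Continuous f) :
    SemiconjBy t (cfc f (cstarAbs t)) (cfc f (cstarAbs (star t))) := by
  have ht := isSelfAdjoint_cstarAbs t
  have ht_star := isSelfAdjoint_cstarAbs (star t)
  have h := semiconjBy_cstarAbs t
  exact semiconjBy_cfc ht ht_star h (by rwa [ht.star_eq, ht_star.star_eq]) hf.continuousOn

end AbsoluteValue

section ShrinkFactor

variable {ε : ℝ}

/-- The factor by which soft thresholding at level `ε > 0` multiplies `x ≥ 0`: it satisfies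
`x * shrinkFactor ε x = max (x - ε) 0`, and is written so as to be continuous at `0`. -/
def shrinkFactor (ε x : ℝ) : ℝ := 1 - ε / max x ε

lemma continuous_shrinkFactor (hε : 0 < ε) : Continuous (shrinkFactor ε) :=
  continuous_const.sub <| continuous_const.div (by fun_prop) fun _ => (lt_max_of_lt_right hε).ne'

lemma shrinkFactor_of_le {x : ℝ} (hε : 0 < ε) (hx : x ≤ ε) : shrinkFactor ε x = 0 := by
  rw [shrinkFactor, max_eq_right hx, div_self hε.ne', sub_self]

lemma shrinkFactor_mul_max_sub_zero (hε : 0 < ε) (x : ℝ) :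
    shrinkFactor ε x * max (ε - x) 0 = 0 := by
  rcases le_total x ε with hx | hx
  · rw [shrinkFactor_of_le hε hx, zero_mul]
  · rw [max_eq_right (sub_nonpos.mpr hx), mul_zero]

lemma mul_self_mul_shrinkFactor_div (hε : 0 < ε) (x : ℝ) :
    x * x * (shrinkFactor ε x / max x ε ^ 2) = shrinkFactor ε x := by
  rcases le_total x ε with hx | hx
  · rw [shrinkFactor_of_le hε hx, zero_div, mul_zero]
  · have : x ≠ 0 := (hε.trans_le hx).ne'
    rw [max_eq_left hx]
    field_simp

lemma norm_mul_one_sub_shrinkFactor_le {x : ℝ} (hε : 0 < ε) (hx : 0 ≤ x) :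
    ‖x * (1 - shrinkFactor ε x)‖ ≤ ε := by
  have hmax : 0 < max x ε := lt_max_of_lt_right hε
  rw [shrinkFactor, sub_sub_cancel, Real.norm_of_nonneg (by positivity), mul_div_left_comm]
  exact mul_le_of_le_one_right hε.le <| (div_le_one hmax).mpr (le_max_left x ε)

lemma one_sub_inv_max_mul (hε : 0 < ε) (x : ℝ) :
    1 - (max x ε)⁻¹ * x = ε⁻¹ * max (ε - x) 0 := by
  rcases le_total x ε with hx | hx
  · rw [max_eq_right hx, max_eq_left (sub_nonneg.mpr hx)]
    field_simp
  · rw [max_eq_left hx, max_eq_right (sub_nonpos.mpr hx), inv_mul_cancel₀ (hε.trans_le hx).ne',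
      sub_self, mul_zero]

end ShrinkFactor

section SoftThreshold

variable {A : Type*} [CStarAlgebra A] {ε : ℝ}

/-- The soft threshold `v(|t| - ε)₊` of an element with polar decomposition `t = v|t|`, written
without `v`, which need not lie in the algebra. -/
def softThreshold (ε : ℝ) (t : A) : A := t * cfc (shrinkFactor ε) (cstarAbs t)

lemma norm_sub_softThreshold_le (hε : 0 < ε) (t : A) : ‖t - softThreshold ε t‖ ≤ ε := by
  have hcont := continuous_shrinkFactor hε
  calc ‖t - softThreshold ε t‖
      = ‖t * cfc (fun x => 1 - shrinkFactor ε x) (cstarAbs t)‖ := by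
        rw [cfc_sub (fun _ => 1) (shrinkFactor ε) _ (by fun_prop) (by fun_prop),
          cfc_const_one ℝ _ (isSelfAdjoint_cstarAbs t), mul_sub, mul_one, softThreshold]
    _ = ‖cfc (fun x => x * (1 - shrinkFactor ε x)) (cstarAbs t)‖ := by
        rw [← norm_cstarAbs_mul, cfc_mul (fun x => x) _ _ (by fun_prop) (by fun_prop),
          cfc_id' ℝ _ (isSelfAdjoint_cstarAbs t)]
    _ ≤ ε := norm_cfc_le hε.le fun x hx =>
        norm_mul_one_sub_shrinkFactor_le hε (nonneg_of_mem_spectrum_cstarAbs hx)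

lemma star_softThreshold (hε : 0 < ε) (t : A) :
    star (softThreshold ε t) = softThreshold ε (star t) := by
  have h := semiconjBy_cfc_cstarAbs t (continuous_shrinkFactor hε)
  have h_sa : IsSelfAdjoint (cfc (shrinkFactor ε) (cstarAbs (star t))) := cfc_predicate _ _
  rw [softThreshold, h.eq, star_mul, h_sa.star_eq, softThreshold]

lemma softThreshold_mul_cfc_max_sub_zero (hε : 0 < ε) (t : A) :
    softThreshold ε t * cfc (fun x : ℝ => max (ε - x) 0) (cstarAbs t) = 0 := by
  have hcont := continuous_shrinkFactor hε
  rw [softThreshold, mul_assoc, ← cfc_mul _ _ _ (by fun_prop) (by fun_prop)]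
  simp only [shrinkFactor_mul_max_sub_zero hε, cfc_const_zero, mul_zero]

lemma exists_softThreshold_eq_mul_star_mul_mul (hε : 0 < ε) (t : A) :
    ∃ k, softThreshold ε t = t * (star t * t) * k := by
  have hcont := continuous_shrinkFactor hε
  have hcont_div : Continuous fun x => shrinkFactor ε x / max x ε ^ 2 :=
    hcont.div (by fun_prop) fun _ => (pow_pos (lt_max_of_lt_right hε) 2).ne'
  refine ⟨cfc (fun x => shrinkFactor ε x / max x ε ^ 2) (cstarAbs t), ?_⟩
  have hq := isSelfAdjoint_cstarAbs t
  have h : cfc (shrinkFactor ε) (cstarAbs t) = cstarAbs t * cstarAbs t *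
      cfc (fun x => shrinkFactor ε x / max x ε ^ 2) (cstarAbs t) := by
    conv_rhs => enter [1]; rw [← cfc_id' ℝ (cstarAbs t)]
    rw [← cfc_mul _ _ _, ← cfc_mul _ _ _ (by fun_prop) hcont_div.continuousOn]
    simp only [mul_self_mul_shrinkFactor_div hε]
  rw [softThreshold, h, cstarAbs_mul_cstarAbs, ← mul_assoc]

end SoftThreshold

namespace ClosedIdeal

section Quotient

variable {A : Type*} [Ring A] [Module ℂ A] [TopologicalSpace A]

/-- The ring-theoretic ideal underlying a closed two-sided ideal, giving access to the quotient
ring `A ⧸ I`. -/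
def toIdeal (I : ClosedIdeal A) : Ideal A where
  __ := I.carrier.toAddSubmonoid
  smul_mem' := I.mul_left_mem

instance (I : ClosedIdeal A) : I.toIdeal.IsTwoSided where
  mul_mem_of_left b ha := I.mul_right_mem b _ ha

/-- The quotient map `A → A/I`. -/
abbrev proj (I : ClosedIdeal A) : A →+* A ⧸ I.toIdeal := Ideal.Quotient.mk I.toIdeal

lemma proj_eq_zero_iff (I : ClosedIdeal A) {a : A} : I.proj a = 0 ↔ a ∈ I.carrier :=
  Ideal.Quotient.eq_zero_iff_mem

lemma proj_mul_proj_eq_one_iff (I : ClosedIdeal A) {a b : A} :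
    I.proj a * I.proj b = 1 ↔ 1 - a * b ∈ I.carrier := by
  rw [← I.proj_eq_zero_iff, map_sub, map_one, map_mul, sub_eq_zero, eq_comm]

end Quotient

section CStar

variable {A : Type*} [CStarAlgebra A] (I : ClosedIdeal A)

-- `star a` is the limit of its soft thresholds, each a right multiple of `star a * a * star a`.
lemma star_mem {a : A} (ha : a ∈ I.carrier) : star a ∈ I.carrier := by
  refine I.isClosed.closure_subset (Metric.mem_closure_iff.mpr fun ε hε => ?_)
  have hε2 : 0 < ε / 2 := half_pos hε
  refine ⟨softThreshold (ε / 2) (star a), ?_, ?_⟩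
  · obtain ⟨k, hk⟩ := exists_softThreshold_eq_mul_star_mul_mul hε2 (star a)
    rw [hk, star_star]
    exact I.mul_right_mem _ _ <| I.mul_left_mem _ _ <| I.mul_right_mem _ _ ha
  · rw [dist_eq_norm]
    exact (norm_sub_softThreshold_le hε2 (star a)).trans_lt (half_lt_self hε)

lemma proj_star_mul_proj_star_eq_one {a b : A} (h : I.proj a * I.proj b = 1) :
    I.proj (star b) * I.proj (star a) = 1 := by
  rw [proj_mul_proj_eq_one_iff] at h ⊢
  simpa only [star_sub, star_one, star_mul] using I.star_mem h

lemma isUnit_proj_star {a : A} (h : IsUnit (I.proj a)) : IsUnit (I.proj (star a)) := by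
  obtain ⟨b, hab, hba⟩ := isUnit_iff_exists.mp h
  obtain ⟨b, rfl⟩ := Ideal.Quotient.mk_surjective b
  exact isUnit_iff_exists.mpr
    ⟨_, I.proj_star_mul_proj_star_eq_one hba, I.proj_star_mul_proj_star_eq_one hab⟩

lemma isUnit_proj_of_isSelfAdjoint_of_mul_eq_one {a : A} (ha : IsSelfAdjoint a)
    {b : A ⧸ I.toIdeal} (h : b * I.proj a = 1) : IsUnit (I.proj a) := by
  obtain ⟨b, rfl⟩ := Ideal.Quotient.mk_surjective b
  have h_right : I.proj a * I.proj (star b) = 1 := by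
    simpa only [ha.star_eq] using I.proj_star_mul_proj_star_eq_one h
  exact isUnit_iff_exists_and_exists.mpr ⟨⟨_, h_right⟩, ⟨_, h⟩⟩

lemma isUnit_proj_of_cfc_max_sub_zero_mem {a : A} (ha : IsSelfAdjoint a) {ε : ℝ} (hε : 0 < ε)
    (h : cfc (fun x : ℝ => max (ε - x) 0) a ∈ I.carrier) : IsUnit (I.proj a) := by
  have hcont : Continuous fun x : ℝ => (max x ε)⁻¹ :=
    Continuous.inv₀ (by fun_prop) fun _ => (lt_max_of_lt_right hε).ne'
  set k := cfc (fun x : ℝ => (max x ε)⁻¹) a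
  have h_one_sub : 1 - k * a = ε⁻¹ • cfc (fun x : ℝ => max (ε - x) 0) a := calc
    1 - k * a = cfc (fun x => 1 - (max x ε)⁻¹ * x) a := by
      rw [cfc_sub (fun _ => 1) _ a (by fun_prop) (by fun_prop), cfc_const_one ℝ a,
        cfc_mul _ _ a hcont.continuousOn (by fun_prop), cfc_id' ℝ a]
    _ = ε⁻¹ • cfc (fun x : ℝ => max (ε - x) 0) a := by
      simp only [one_sub_inv_max_mul hε]
      exact cfc_const_mul ε⁻¹ _ a
  have h_left : I.proj k * I.proj a = 1 := by
    rw [proj_mul_proj_eq_one_iff, h_one_sub]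
    exact I.carrier.smul_of_tower_mem _ h
  exact I.isUnit_proj_of_isSelfAdjoint_of_mul_eq_one ha h_left

lemma isUnit_proj_of_isUnit_proj_cstarAbs {t : A} (h : IsUnit (I.proj (cstarAbs t)))
    (h_star : IsUnit (I.proj (cstarAbs (star t)))) : IsUnit (I.proj t) := by
  have h_left : IsUnit (I.proj (star t) * I.proj t) := by
    rw [← map_mul, ← cstarAbs_mul_cstarAbs, map_mul]
    exact h.mul h
  have h_right : IsUnit (I.proj t * I.proj (star t)) := by
    have := h_star.mul h_star
    rwa [← map_mul, cstarAbs_mul_cstarAbs, star_star, map_mul] at this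
  obtain ⟨b, hb⟩ := h_left.exists_left_inv
  obtain ⟨c, hc⟩ := h_right.exists_right_inv
  rw [← mul_assoc] at hb
  rw [mul_assoc] at hc
  exact isUnit_iff_exists_and_exists.mpr ⟨⟨_, hc⟩, ⟨_, hb⟩⟩

end CStar

end ClosedIdeal

lemma mem_regSet_iff {A : Type*} [Ring A] [Module ℂ A] [TopologicalSpace A] {a : A} :
    a ∈ regSet A ↔ ∀ I : ClosedIdeal A,
      ((∃ b, b * I.proj a = 1) ∨ (∃ b, I.proj a * b = 1)) → IsUnit (I.proj a) := by
  simp only [regSet, Set.mem_ofPred_eq, isUnit_iff_exists, Ideal.Quotient.mk_surjective.exists,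
    ClosedIdeal.proj_mul_proj_eq_one_iff, and_comm]

namespace AlmostRegular

variable {A : Type*} [CStarAlgebra A] {t : A} {ε : ℝ}

protected lemma star (h : AlmostRegular ε t) : AlmostRegular ε (star t) := fun I => by
  rw [star_star]
  exact (h I).symm

lemma isUnit_proj_softThreshold_of_mul_eq_one (h : AlmostRegular ε t) (hε : 0 < ε)
    (I : ClosedIdeal A) {b : A ⧸ I.toIdeal} (hb : b * I.proj (softThreshold ε t) = 1) :
    IsUnit (I.proj (softThreshold ε t)) := by
  have h_mem : cfc (fun x : ℝ => max (ε - x) 0) (cstarAbs t) ∈ I.carrier := by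
    rw [← I.proj_eq_zero_iff, ← one_mul (I.proj _), ← hb, mul_assoc, ← map_mul,
      softThreshold_mul_cfc_max_sub_zero hε, map_zero, mul_zero]
  have ht : IsUnit (I.proj t) := I.isUnit_proj_of_isUnit_proj_cstarAbs
    (I.isUnit_proj_of_cfc_max_sub_zero_mem (isSelfAdjoint_cstarAbs t) hε h_mem)
    (I.isUnit_proj_of_cfc_max_sub_zero_mem (isSelfAdjoint_cstarAbs _) hε ((h I).mp h_mem))
  rw [softThreshold, map_mul, ← mul_assoc] at hb
  have h_factor : IsUnit (I.proj (cfc (shrinkFactor ε) (cstarAbs t))) :=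
    I.isUnit_proj_of_isSelfAdjoint_of_mul_eq_one (cfc_predicate _ _) hb
  rw [softThreshold, map_mul]
  exact ht.mul h_factor

lemma softThreshold_mem_regSet (h : AlmostRegular ε t) (hε : 0 < ε) :
    softThreshold ε t ∈ regSet A := by
  refine mem_regSet_iff.mpr fun I => ?_
  rintro (⟨b, hb⟩ | ⟨b, hb⟩)
  · exact h.isUnit_proj_softThreshold_of_mul_eq_one hε I hb
  · obtain ⟨b, rfl⟩ := Ideal.Quotient.mk_surjective b
    have hb_star := I.proj_star_mul_proj_star_eq_one hb
    rw [star_softThreshold hε] at hb_star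
    have h_unit := I.isUnit_proj_star (h.star.isUnit_proj_softThreshold_of_mul_eq_one hε I hb_star)
    rwa [star_softThreshold hε, star_star] at h_unit

end AlmostRegular

/-- If `t` is `ε`-almost regular, then `dist(t, R(A)) ≤ ε`. -/
theorem almostRegular_infDist_regSet_le {A : Type*} [CStarAlgebra A] (t : A) (ε : ℝ)
    (hε : 0 < ε) (h : AlmostRegular ε t) :
    Metric.infDist t (regSet A) ≤ ε := by
  calc Metric.infDist t (regSet A)
      ≤ dist t (softThreshold ε t) :=
        Metric.infDist_le_dist_of_mem (h.softThreshold_mem_regSet hε)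
    _ = ‖t - softThreshold ε t‖ := dist_eq_norm t _
    _ ≤ ε := norm_sub_softThreshold_le hε t
end
end

section
/- Let B be a proper hereditary C*-subalgebra of a unital C*-algebra A, and let B + ℂ1 denote the unital C*-subalgebra of A spanned by B and the identity. If t ∈ 1 + B (i.e. t = 1 + b for some b ∈ B) and t lies in the norm closure of GL(A), then t lies in the norm closure of GL(B + ℂ1), the group of elements of B + ℂ1 invertible with inverse in B + ℂ1. -/
noncomputable section

/-- `B` is a hereditary subalgebra of `A`: whenever `a ∈ A`, `b ∈ B` and `0 ≤ a ≤ b`,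
then `a ∈ B`. -/
def IsHereditary {A : Type*} [NonUnitalNonAssocSemiring A] [Module ℂ A] [Star A]
    [PartialOrder A] (B : NonUnitalStarSubalgebra ℂ A) : Prop :=
  ∀ a : A, ∀ b ∈ B, 0 ≤ a → a ≤ b → a ∈ B

/-- The set `B + ℂ1` inside a unital algebra `A`. -/
def plusOneSet {A : Type*} [NonUnitalNonAssocSemiring A] [Module ℂ A] [Star A] [One A]
    (B : NonUnitalStarSubalgebra ℂ A) : Set A :=
  {x | ∃ b ∈ B, ∃ c : ℂ, x = b + c • (1 : A)}

/-!
Heredity gives `B * A * B ⊆ B`, and this inclusion makes the argument purely ring-theoretic.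
Suppose `s` is invertible and close to `1 + b`. Then `c := (s - b)⁻¹` is close to `1`, and
`s * c = 1 + b * c` is invertible. Write `1 + b * c = w + b`, where `w := 1 + b * (c - 1)` is close
to `1`, hence invertible. Dividing by `w` on the left gives the invertible element `1 + w⁻¹ * b`,
which is close to `1 + b`. It lies in `1 + B` because `w⁻¹ = 1 - b * (c - 1) * w⁻¹`, so that
`w⁻¹ * b = b - b * ((c - 1) * w⁻¹) * b`.
-/

open Filter Topology

/-- `B` is a bi-ideal of `R`, that is, `B * R * B ⊆ B`. This is what remains of heredity in the
ring-theoretic part of the argument. Additivity of `B` is not part of the predicate; it comes from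
the type of `B`, and multiplicative closure follows when `R` has a unit. -/
def IsBiIdeal {R S : Type*} [Mul R] [SetLike S R] (B : S) : Prop :=
  ∀ ⦃x⦄, x ∈ B → ∀ a : R, ∀ ⦃y⦄, y ∈ B → x * a * y ∈ B

section Ring

variable {R S : Type*} [Ring R] [SetLike S R] [AddSubgroupClass S R] {B : S}

theorem IsBiIdeal.inverse_one_add_mul_mul_mem (hB : IsBiIdeal B) {x a : R} (hx : x ∈ B)
    (hu : IsUnit (1 + x * a)) : Ring.inverse (1 + x * a) * x ∈ B := by
  set v := Ring.inverse (1 + x * a)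
  have hv : v = 1 - x * (a * v) := by
    rw [eq_sub_iff_add_eq, ← mul_assoc, ← one_add_mul, Ring.mul_inverse_cancel _ hu]
  have hvx : v * x = x - x * (a * v) * x := by
    conv_lhs => rw [hv, sub_mul, one_mul]
  rw [hvx]
  exact sub_mem hx (hB hx _ hx)

theorem IsBiIdeal.inverse_sub_one_mem (hB : IsBiIdeal B) {u : R} (hu : IsUnit u)
    (huB : u - 1 ∈ B) : Ring.inverse u - 1 ∈ B := by
  have hmem : Ring.inverse u * (u - 1) ∈ B := by
    simpa [hu] using hB.inverse_one_add_mul_mul_mem (a := 1) huB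
  have hsub : Ring.inverse u - 1 = -(Ring.inverse u * (u - 1)) := by
    rw [mul_sub_one, Ring.inverse_mul_cancel _ hu, neg_sub]
  rw [hsub]
  exact neg_mem hmem

theorem isUnit_one_add_inverse_mul {w b : R} (hw : IsUnit w) (hwb : IsUnit (w + b)) :
    IsUnit (1 + Ring.inverse w * b) := by
  have hfactor : 1 + Ring.inverse w * b = Ring.inverse w * (w + b) := by
    rw [mul_add, Ring.inverse_mul_cancel _ hw]
  rw [hfactor]
  exact hw.ringInverse.mul hwb

end Ring

section NormedRing

variable {R : Type*} [NormedRing R] [HasSummableGeomSeries R]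

theorem eventually_isUnit_nhds_one : ∀ᶠ x : R in 𝓝 1, IsUnit x :=
  Units.nhds (1 : Rˣ)

theorem tendsto_ringInverse_nhds_one : Tendsto (Ring.inverse : R → R) (𝓝 1) (𝓝 1) := by
  simpa [ContinuousAt] using NormedRing.inverse_continuousAt (1 : Rˣ)

theorem frequently_isUnit_one_add_mul {b : R} (hb : 1 + b ∈ closure (glSet R)) :
    ∃ᶠ c in 𝓝 1, IsUnit (1 + b * c) := by
  have hsub : Tendsto (fun s : R ↦ s - b) (𝓝 (1 + b)) (𝓝 1) :=
    Continuous.tendsto' (by fun_prop) _ _ (add_sub_cancel_right 1 b)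
  refine (tendsto_ringInverse_nhds_one.comp hsub).frequently ?_
  refine ((mem_closure_iff_frequently.1 hb).and_eventually
    (hsub.eventually eventually_isUnit_nhds_one)).mono ?_
  rintro s ⟨hs : IsUnit s, hsb⟩
  have hmul : 1 + b * Ring.inverse (s - b) = s * Ring.inverse (s - b) := by
    rw [← Ring.mul_inverse_cancel _ hsb, ← add_mul, sub_add_cancel]
  change IsUnit (1 + b * Ring.inverse (s - b))
  rw [hmul]
  exact hs.mul hsb.ringInverse

theorem one_add_mem_closure_isUnit_sub_one_mem {S : Type*} [SetLike S R] [AddSubgroupClass S R]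
    {B : S} (hB : IsBiIdeal B) {b : R} (hb : b ∈ B) (ht : 1 + b ∈ closure (glSet R)) :
    1 + b ∈ closure {x : R | IsUnit x ∧ x - 1 ∈ B} := by
  have hw : Tendsto (fun c : R ↦ 1 + b * (c - 1)) (𝓝 1) (𝓝 1) :=
    Continuous.tendsto' (by fun_prop) _ _ (by simp)
  have hlim : Tendsto (fun c : R ↦ 1 + Ring.inverse (1 + b * (c - 1)) * b) (𝓝 1) (𝓝 (1 + b)) := by
    simpa using ((tendsto_ringInverse_nhds_one.comp hw).mul_const b).const_add 1
  refine mem_closure_iff_frequently.2 (hlim.frequently ?_)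
  refine ((frequently_isUnit_one_add_mul ht).and_eventually
    (hw.eventually eventually_isUnit_nhds_one)).mono ?_
  rintro c ⟨hbc, hwc⟩
  have hsum : 1 + b * (c - 1) + b = 1 + b * c := by noncomm_ring
  refine ⟨isUnit_one_add_inverse_mul hwc (hsum ▸ hbc), ?_⟩
  rw [add_sub_cancel_left]
  exact hB.inverse_one_add_mul_mul_mem hb hwc

theorem mem_closure_units_plusOne_general {S : Type*} [SetLike S R] [AddSubgroupClass S R]
    {B : S} (hB : IsBiIdeal B) {b : R} (hb : b ∈ B) (ht : 1 + b ∈ closure (glSet R)) :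
    1 + b ∈ closure {x : R | x - 1 ∈ B ∧ ∃ y, y - 1 ∈ B ∧ x * y = 1 ∧ y * x = 1} := by
  refine closure_mono ?_ (one_add_mem_closure_isUnit_sub_one_mem hB hb ht)
  rintro x ⟨hx, hxB⟩
  exact ⟨hxB, Ring.inverse x, hB.inverse_sub_one_mem hx hxB,
    Ring.mul_inverse_cancel x hx, Ring.inverse_mul_cancel x hx⟩

end NormedRing

section StarAlgebra

theorem isBiIdeal_of_conjugate_mem {A : Type*} [NonUnitalRing A] [StarRing A] [Module ℂ A]
    [IsScalarTower ℂ A A] [SMulCommClass ℂ A A] [StarModule ℂ A]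
    {B : NonUnitalStarSubalgebra ℂ A}
    (hconj : ∀ x ∈ B, ∀ a, x * a * star x ∈ B) : IsBiIdeal B := by
  intro x hx a y hy
  have hcross : ∀ z ∈ B, z * a * y + star y * a * star z ∈ B := by
    intro z hz
    have hexpand : z * a * y + star y * a * star z =
        (z + star y) * a * star (z + star y) - z * a * star z - star y * a * star (star y) := by
      simp only [star_add, star_star]
      noncomm_ring
    rw [hexpand]
    exact sub_mem (sub_mem (hconj _ (add_mem hz (star_mem hy)) a) (hconj z hz a))
      (hconj _ (star_mem hy) a)
  have hpolar : x * a * y = (1 / 2 : ℂ) • ((x * a * y + star y * a * star x) -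
      Complex.I • ((Complex.I • x) * a * y + star y * a * star (Complex.I • x))) := by
    simp only [star_smul, Complex.star_def, Complex.conj_I, smul_mul_assoc, mul_smul_comm,
      smul_add, smul_smul]
    match_scalars <;> norm_num
  rw [hpolar]
  exact SMulMemClass.smul_mem _ (sub_mem (hcross x hx)
    (SMulMemClass.smul_mem _ (hcross _ (SMulMemClass.smul_mem _ hx))))

variable {A : Type*} [NonUnitalCStarAlgebra A] [PartialOrder A] [StarOrderedRing A]
  {B : NonUnitalStarSubalgebra ℂ A}

theorem IsHereditary.conjugate_mem (hB : IsHereditary B) {x : A} (hx : x ∈ B) (a : A) :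
    x * a * star x ∈ B := by
  have ha : a ∈ Submodule.span ℂ {a : A | 0 ≤ a} := CStarAlgebra.span_nonneg (A := A) ▸ trivial
  induction ha using Submodule.span_induction with
  | mem a ha =>
    have hle : x * a * star x ≤ (‖a‖ : ℂ) • (x * star x) := by
      simpa using CStarAlgebra.star_right_conjugate_le_norm_smul (IsSelfAdjoint.of_nonneg ha)
    have hmem : (‖a‖ : ℂ) • (x * star x) ∈ B :=
      SMulMemClass.smul_mem _ (mul_mem hx (star_mem hx))
    exact hB _ _ hmem (star_right_conjugate_nonneg ha x) hle
  | zero => simp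
  | add a a' _ _ iha iha' => simpa only [mul_add, add_mul] using add_mem iha iha'
  | smul c a _ iha => simpa only [mul_smul_comm, smul_mul_assoc] using SMulMemClass.smul_mem c iha

theorem IsHereditary.isBiIdeal (hB : IsHereditary B) : IsBiIdeal B :=
  isBiIdeal_of_conjugate_mem fun _ hx a ↦ hB.conjugate_mem hx a

end StarAlgebra

theorem mem_plusOneSet_of_sub_one_mem {A : Type*} [NonAssocRing A] [Module ℂ A] [Star A]
    {B : NonUnitalStarSubalgebra ℂ A} {x : A} (hx : x - 1 ∈ B) : x ∈ plusOneSet B :=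
  ⟨x - 1, hx, 1, by rw [one_smul, sub_add_cancel]⟩

/-- If `B` is a proper hereditary C*-subalgebra of the unital C*-algebra `A`,
`t = 1 + b ∈ 1 + B`, and `t` is a limit of invertibles in `A`, then `t` is a limit of elements
of `B + ℂ1` that are invertible with inverse in `B + ℂ1`. -/
theorem mem_closure_units_plusOne {A : Type*} [CStarAlgebra A] [PartialOrder A]
    [StarOrderedRing A] (B : NonUnitalStarSubalgebra ℂ A) (hBclosed : IsClosed (B : Set A))
    (hBher : IsHereditary B) (hBproper : (B : Set A) ≠ Set.univ)
    (b : A) (hb : b ∈ B) (ht : (1 + b) ∈ closure (glSet A)) :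
    (1 + b) ∈
      closure {x : A | x ∈ plusOneSet B ∧ ∃ y ∈ plusOneSet B, x * y = 1 ∧ y * x = 1} := by
  refine closure_mono ?_ (mem_closure_units_plusOne_general hBher.isBiIdeal hb ht)
  rintro x ⟨hx, y, hy, hxy⟩
  exact ⟨mem_plusOneSet_of_sub_one_mem hx, y, mem_plusOneSet_of_sub_one_mem hy, hxy⟩
end
end
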